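/- Let η_T⁻ and η_T⁺ be the minimum and maximum over ω ∈ [0,π) of the winding number η_T(ω) of the system Jz' = S(t)z. Then there exists ℓ ∈ ℤ such that either (Case 1) ℓ − 1/2 < η_T⁻ ≤ ℓ ≤ η_T⁺ < ℓ + 1/2, or (Case 2) ℓ < η_T⁻ ≤ η_T⁺ < ℓ + 1. Moreover the system has a nontrivial T-periodic solution if and only if Case 1 holds with η_T⁻ = ℓ or η_T⁺ = ℓ, and a nontrivial T-antiperiodic solution if and only if Case 2 holds with η_T⁻ = ℓ + 1/2 or η_T⁺ = ℓ + 1/2. -/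

import Mathlib

/-!
In Prüfer coordinates `z = r (cos θ, -sin θ)` each `ω` gives a solution `z_ω` of `J z' = S z`
with `z_ω(0) = (cos ω, -sin ω)`. Since the Wronskian of two solutions is constant
(`Sol.wronskian`),
`r(t,ω) r(t,ω') sin (θ(t,ω') - θ(t,ω)) = sin (ω' - ω)`. Hence `r > 0`, solutions are determined
by their initial value, and for `0 < ω' - ω < π` the difference `θ(t,ω') - θ(t,ω)` stays in
`(0, π)`. So any two values of the winding number on `[0, π)` differ by less than `1/2`
(`PolarFlow.abs_lt`), and the dichotomy follows according to whether `[η⁻, η⁺]` contains an integer.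

Write `δ = ω' - ω` and `R = r(T,ω)`. Superposition gives (`PolarFlow.key`), with `k` independent
of `ω'`,
`r(T,ω') sin (2π (η(ω') - η(ω))) = sin δ (cos δ (R⁻¹ - R) - k sin δ)`.
The angle on the left lies in `(-π, π)`, so the right side has the sign of `η(ω') - η(ω)`. It has
constant sign precisely when `R = 1`; thus `η` is extremal at `ω` if and only if `R = 1`
(`PolarFlow.extremal_iff`). A solution with `z(t + T) = ±z(t)` is a multiple of some `z_ω`
with `R = 1` and `θ(T,ω) - ω` an even (respectively odd) multiple of `π`, and conversely; this
turns extremality into the stated criteria.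
-/

open Matrix Real

/-- The standard 2×2 symplectic matrix `J`. -/
def Jmat : Matrix (Fin 2) (Fin 2) ℝ := !![0, -1; 1, 0]

/-- `z` is a solution of the planar linear Hamiltonian system `J z' = S(t) z`. -/
def IsSolution (S : ℝ → Matrix (Fin 2) (Fin 2) ℝ) (z : ℝ → Fin 2 → ℝ) : Prop :=
  ∃ z' : ℝ → Fin 2 → ℝ,
    (∀ t i, HasDerivAt (fun s => z s i) (z' t i) t) ∧
    ∀ t, Jmat.mulVec (z' t) = (S t).mulVec (z t)

/-! ### The planar system in scalar and polar form -/

/-- The scalar form of `J z' = S z` for `z = (x, y)` and `S = !![a, b; b, c]`. -/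
def Sol (a b c x y : ℝ → ℝ) : Prop :=
  ∀ t, HasDerivAt x (b t * x t + c t * y t) t ∧ HasDerivAt y (-(a t * x t) - b t * y t) t

/-- `θ` and `r` are the Prüfer angle and radius, as functions of time and of the initial angle,
of the solutions starting on the unit circle. -/
structure PolarFlow (a b c : ℝ → ℝ) (θ r : ℝ → ℝ → ℝ) : Prop where
  θ0 : ∀ ω, θ 0 ω = ω
  r0 : ∀ ω, r 0 ω = 1
  dθ : ∀ ω t, HasDerivAt (fun s => θ s ω)
      (a t * cos (θ t ω) ^ 2 + c t * sin (θ t ω) ^ 2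
        - 2 * b t * cos (θ t ω) * sin (θ t ω)) t
  dr : ∀ ω t, HasDerivAt (fun s => r s ω)
      (- r t ω * (sin (θ t ω) * cos (θ t ω) * (c t - a t)
        - (cos (θ t ω) ^ 2 - sin (θ t ω) ^ 2) * b t)) t

theorem Sol.wronskian {a b c x y u v : ℝ → ℝ} (h : Sol a b c x y) (k : Sol a b c u v) (t : ℝ) :
    x t * v t - u t * y t = x 0 * v 0 - u 0 * y 0 := by
  have hd : ∀ t, HasDerivAt (fun t => x t * v t - u t * y t) 0 t := by
    intro t
    refine (((h t).1.mul (k t).2).sub ((k t).1.mul (h t).2)).congr_deriv ?_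
    ring
  exact is_const_of_deriv_eq_zero (fun t => (hd t).differentiableAt) (fun t => (hd t).deriv) t 0

theorem Sol.comb {a b c x y u v : ℝ → ℝ} (h : Sol a b c x y) (k : Sol a b c u v) (p q : ℝ) :
    Sol a b c (fun t => p * x t + q * u t) (fun t => p * y t + q * v t) := by
  intro t
  constructor
  · refine HasDerivAt.congr_deriv (((h t).1.const_mul p).add ((k t).1.const_mul q)) ?_
    ring
  · refine HasDerivAt.congr_deriv (((h t).2.const_mul p).add ((k t).2.const_mul q)) ?_
    ring

theorem Sol.shift {a b c x y : ℝ → ℝ} {T : ℝ} (haper : ∀ t, a (t + T) = a t)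
    (hbper : ∀ t, b (t + T) = b t) (hcper : ∀ t, c (t + T) = c t) (h : Sol a b c x y) :
    Sol a b c (fun t => x (t + T)) (fun t => y (t + T)) := by
  intro t
  have h1 := (h (t + T)).1.comp_add_const t T
  have h2 := (h (t + T)).2.comp_add_const t T
  rw [hbper, hcper] at h1
  rw [hbper, haper] at h2
  exact ⟨h1, h2⟩

/-- A continuous function which never vanishes and is positive at `0` is positive. -/
theorem pos_of_continuous_of_ne_zero {f : ℝ → ℝ} (hf : Continuous f) (h0 : 0 < f 0) (hne : ∀ t, f t ≠ 0)
    (t : ℝ) : 0 < f t := by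
  by_contra hcon
  push Not at hcon
  obtain ⟨s, hs⟩ := mem_range_of_exists_le_of_exists_ge hf ⟨t, hcon⟩ ⟨0, h0.le⟩
  exact hne s hs

namespace PolarFlow

variable {a b c : ℝ → ℝ} {θ r : ℝ → ℝ → ℝ}

theorem sol (F : PolarFlow a b c θ r) (ω : ℝ) :
    Sol a b c (fun t => r t ω * cos (θ t ω)) (fun t => -(r t ω * sin (θ t ω))) := by
  intro t
  have hs := sin_sq_add_cos_sq (θ t ω)
  constructor
  · refine HasDerivAt.congr_deriv ((F.dr ω t).mul (F.dθ ω t).cos) ?_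
    linear_combination (b t * r t ω * cos (θ t ω) + c t * r t ω * (-sin (θ t ω))) * hs
  · refine HasDerivAt.congr_deriv (((F.dr ω t).mul (F.dθ ω t).sin).neg) ?_
    linear_combination (-(a t * (r t ω * cos (θ t ω))) + b t * (r t ω * sin (θ t ω))) * hs

/-! ### Wronskians, positivity of the radius and uniqueness -/

/-- The constancy of the Wronskian in polar coordinates. -/
theorem wronskian (F : PolarFlow a b c θ r) (ω ω' t : ℝ) :
    r t ω * r t ω' * sin (θ t ω' - θ t ω) = sin (ω' - ω) := by
  have h := (F.sol ω).wronskian (F.sol ω') t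
  simp only [F.θ0, F.r0] at h
  rw [sin_sub, sin_sub]
  linear_combination -h

theorem r_ne (F : PolarFlow a b c θ r) (ω t : ℝ) : r t ω ≠ 0 := by
  intro h
  have := F.wronskian ω (ω + π / 2) t
  simp [h] at this

theorem r_pos (F : PolarFlow a b c θ r) (ω t : ℝ) : 0 < r t ω := by
  refine pos_of_continuous_of_ne_zero (f := fun t => r t ω) ?_ (by simp [F.r0]) (F.r_ne ω) t
  exact continuous_iff_continuousAt.2 fun t => (F.dr ω t).continuousAt

theorem cont_θ (F : PolarFlow a b c θ r) (ω : ℝ) : Continuous fun t => θ t ω :=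
  continuous_iff_continuousAt.2 fun t => (F.dθ ω t).continuousAt

/-- Two angles starting at distance in `(0, π)` stay at distance in `(0, π)`. -/
theorem diff_mem (F : PolarFlow a b c θ r) {ω ω' : ℝ} (h0 : 0 < ω' - ω) (h1 : ω' - ω < π)
    (t : ℝ) : 0 < θ t ω' - θ t ω ∧ θ t ω' - θ t ω < π := by
  have hc : Continuous fun t => θ t ω' - θ t ω := (F.cont_θ ω').sub (F.cont_θ ω)
  have hne : ∀ t, sin (θ t ω' - θ t ω) ≠ 0 := by
    intro t h
    have := F.wronskian ω ω' t
    rw [h, mul_zero] at this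
    exact (sin_pos_of_pos_of_lt_pi h0 h1).ne this
  constructor
  · refine pos_of_continuous_of_ne_zero hc (by simpa [F.θ0] using h0) (fun t h => hne t ?_) t
    rw [h, sin_zero]
  · have := pos_of_continuous_of_ne_zero (f := fun t => π - (θ t ω' - θ t ω)) (continuous_const.sub hc)
      (by simp only [F.θ0]; linarith) (fun t h => hne t ?_) t
    · linarith
    · rw [← sub_eq_zero.1 h, sin_pi]

theorem abs_lt (F : PolarFlow a b c θ r) {ω ω' : ℝ} (h : ω ∈ Set.Ico 0 π)
    (h' : ω' ∈ Set.Ico 0 π) (t : ℝ) :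
    -π < (θ t ω' - ω') - (θ t ω - ω) ∧ (θ t ω' - ω') - (θ t ω - ω) < π := by
  obtain ⟨h1, h2⟩ := h
  obtain ⟨h3, h4⟩ := h'
  rcases lt_trichotomy ω ω' with hlt | heq | hlt
  · have := F.diff_mem (ω := ω) (ω' := ω') (by linarith) (by linarith) t
    constructor <;> linarith
  · subst heq
    constructor <;> linarith [pi_pos]
  · have := F.diff_mem (ω := ω') (ω' := ω) (by linarith) (by linarith) t
    constructor <;> linarith

/-- Uniqueness for the linear system, from Wronskians with a fundamental system. -/
theorem uniq (F : PolarFlow a b c θ r) {x y : ℝ → ℝ} (h : Sol a b c x y) (hx : x 0 = 0)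
    (hy : y 0 = 0) (t : ℝ) : x t = 0 ∧ y t = 0 := by
  have h1 := h.wronskian (F.sol 0) t
  have h2 := h.wronskian (F.sol (π / 2)) t
  have h3 := (F.sol 0).wronskian (F.sol (π / 2)) t
  simp only [F.θ0, F.r0, hx, hy, cos_zero, sin_zero, cos_pi_div_two, sin_pi_div_two] at h1 h2 h3
  constructor
  · linear_combination x t * h3 - r t 0 * cos (θ t 0) * h2
      + r t (π / 2) * cos (θ t (π / 2)) * h1
  · linear_combination y t * h3 + r t 0 * sin (θ t 0) * h2
      - r t (π / 2) * sin (θ t (π / 2)) * h1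

/-! ### Comparison of rotations and extremality -/

theorem superposition (F : PolarFlow a b c θ r) (ω δ t : ℝ) :
    r t (ω + δ) * cos (θ t (ω + δ)) = cos δ * (r t ω * cos (θ t ω)) +
        sin δ * (r t (ω + π / 2) * cos (θ t (ω + π / 2))) ∧
    r t (ω + δ) * sin (θ t (ω + δ)) = cos δ * (r t ω * sin (θ t ω)) +
        sin δ * (r t (ω + π / 2) * sin (θ t (ω + π / 2))) := by
  have h := F.uniq (((F.sol ω).comb (F.sol (ω + π / 2)) (cos δ) (sin δ)).comb
    (F.sol (ω + δ)) 1 (-1)) ?_ ?_ t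
  · constructor
    · linarith [h.1]
    · linarith [h.2]
  · simp only [F.θ0, F.r0, cos_add, cos_pi_div_two, sin_pi_div_two]
    ring
  · simp only [F.θ0, F.r0, sin_add, cos_pi_div_two, sin_pi_div_two]
    ring

/-- The exact formula comparing the rotations of two initial angles. -/
theorem key (F : PolarFlow a b c θ r) (ω t : ℝ) : ∃ k : ℝ, ∀ ω',
    r t ω' * sin ((θ t ω' - ω') - (θ t ω - ω)) =
      sin (ω' - ω) * (cos (ω' - ω) * ((r t ω)⁻¹ - r t ω) - k * sin (ω' - ω)) := by
  refine ⟨r t (ω + π / 2) * cos (θ t (ω + π / 2) - θ t ω), fun ω' => ?_⟩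
  obtain ⟨δ, rfl⟩ : ∃ δ, ω' = ω + δ := ⟨ω' - ω, by ring⟩
  obtain ⟨h1, h2⟩ := F.superposition ω δ t
  have h3 := F.wronskian ω (ω + π / 2) t
  have h4 := sin_sq_add_cos_sq (θ t ω)
  have hR := F.r_ne ω t
  rw [add_sub_cancel_left, sin_pi_div_two] at h3
  have h5 : (r t ω)⁻¹ = r t (ω + π / 2) * sin (θ t (ω + π / 2) - θ t ω) :=
    (eq_inv_of_mul_eq_one_right (by rw [← h3]; ring)).symm
  rw [h5, show θ t (ω + δ) - (ω + δ) - (θ t ω - ω) = θ t (ω + δ) - θ t ω - δ by ring,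
    add_sub_cancel_left, sin_sub _ δ, sin_sub, sin_sub, cos_sub, cos_sub]
  linear_combination (cos δ * cos (θ t ω) - sin δ * sin (θ t ω)) * h2
    + (-cos δ * sin (θ t ω) - sin δ * cos (θ t ω)) * h1 - sin δ * cos δ * r t ω * h4

/-- `sin δ (p cos δ - k sin δ)` with `p ≠ 0` takes negative values, and it is `π`-periodic in `δ`,
so it does so on each interval `[-ω, π - ω)`. -/
theorem exists_neg {p k ω : ℝ} (hp : p ≠ 0) (hω : ω ∈ Set.Ico 0 π) :
    ∃ ω' ∈ Set.Ico 0 π, sin (ω' - ω) * (cos (ω' - ω) * p - k * sin (ω' - ω)) < 0 := by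
  obtain ⟨h1, h2⟩ := hω
  -- `δ` solves `p cot δ = k - 1`
  set φ := arctan ((k - 1) / p) with hφ
  have hcpos : 0 < cos φ := cos_arctan_pos _
  have hs : sin φ * p = (k - 1) * cos φ := by
    have := tan_mul_cos hcpos.ne'
    rw [hφ, tan_arctan, ← hφ] at this
    rw [← this]
    field_simp
  have b1 := arctan_lt_pi_div_two ((k - 1) / p)
  have b2 := neg_pi_div_two_lt_arctan ((k - 1) / p)
  rw [← hφ] at b1 b2
  have hneg : cos φ * (sin φ * p - k * cos φ) < 0 := by
    rw [hs]
    nlinarith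
  by_cases hlt : ω + (π / 2 - φ) < π
  · refine ⟨ω + (π / 2 - φ), ⟨by linarith, hlt⟩, ?_⟩
    rw [add_sub_cancel_left, sin_pi_div_two_sub, cos_pi_div_two_sub]
    exact hneg
  · refine ⟨ω + (π / 2 - φ) - π, ⟨by linarith, by linarith⟩, ?_⟩
    rw [show ω + (π / 2 - φ) - π - ω = (π / 2 - φ) - π by ring, sin_sub_pi, cos_sub_pi,
      sin_pi_div_two_sub, cos_pi_div_two_sub]
    linarith

theorem nonneg_of_sin_nonneg {x : ℝ} (h1 : -π < x) (h : 0 ≤ sin x) : 0 ≤ x := by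
  by_contra hx
  push Not at hx
  exact absurd (sin_neg_of_neg_of_neg_pi_lt hx h1) (not_lt.2 h)

/-- The rotation `θ(t,·) - id` is extremal at `ω` exactly when the solution through `ω` has
returned to the unit circle. -/
theorem extremal_iff (F : PolarFlow a b c θ r) {ω : ℝ} (hω : ω ∈ Set.Ico 0 π) (t : ℝ) :
    r t ω = 1 ↔ (∀ ω' ∈ Set.Ico 0 π, θ t ω - ω ≤ θ t ω' - ω') ∨
      (∀ ω' ∈ Set.Ico 0 π, θ t ω' - ω' ≤ θ t ω - ω) := by
  obtain ⟨k, hk⟩ := F.key ω t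
  constructor
  · intro h1
    have hk' : ∀ ω', r t ω' * sin ((θ t ω' - ω') - (θ t ω - ω)) = -k * sin (ω' - ω) ^ 2 := by
      intro ω'
      rw [hk, h1]
      ring
    rcases le_total k 0 with h | h
    · left
      intro ω' hω'
      have hs : 0 ≤ r t ω' * sin ((θ t ω' - ω') - (θ t ω - ω)) := by
        rw [hk']
        exact mul_nonneg (by linarith) (sq_nonneg _)
      have := nonneg_of_sin_nonneg (F.abs_lt hω hω' t).1
        (nonneg_of_mul_nonneg_right hs (F.r_pos ω' t))
      linarith
    · right
      intro ω' hω'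
      have hs : 0 ≤ r t ω' * sin ((θ t ω - ω) - (θ t ω' - ω')) := by
        rw [← neg_sub (θ t ω' - ω'), sin_neg, mul_neg, hk']
        nlinarith [mul_nonneg h (sq_nonneg (sin (ω' - ω)))]
      have := nonneg_of_sin_nonneg (F.abs_lt hω' hω t).1
        (nonneg_of_mul_nonneg_right hs (F.r_pos ω' t))
      linarith
  · intro h
    by_contra hne
    have hR := F.r_pos ω t
    have hp : (r t ω)⁻¹ - r t ω ≠ 0 := by
      intro h0
      apply hne
      have h2 : r t ω * r t ω = 1 := by
        have := mul_inv_cancel₀ hR.ne'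
        rw [sub_eq_zero.1 h0] at this
        exact this
      nlinarith
    rcases h with h | h
    · obtain ⟨ω', hω', hn⟩ := exists_neg (k := k) hp hω
      rw [← hk] at hn
      have := sin_nonneg_of_nonneg_of_le_pi (sub_nonneg.2 (h ω' hω')) (F.abs_lt hω hω' t).2.le
      exact absurd (mul_nonneg (F.r_pos ω' t).le this) (not_le.2 hn)
    · obtain ⟨ω', hω', hn⟩ := exists_neg (k := -k) (neg_ne_zero.2 hp) hω
      have hn' : 0 < r t ω' * sin ((θ t ω' - ω') - (θ t ω - ω)) := by
        rw [hk]
        linarith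
      have := sin_nonpos_of_nonpos_of_neg_pi_le (sub_nonpos.2 (h ω' hω')) (F.abs_lt hω hω' t).1.le
      exact absurd (mul_nonpos_of_nonneg_of_nonpos (F.r_pos ω' t).le this) (not_le.2 hn')

end PolarFlow

/-! ### Floquet solutions with multiplier `±1` -/

theorem exists_polar {x y : ℝ} (h : ¬(x = 0 ∧ y = 0)) :
    ∃ ω ∈ Set.Ico 0 π, ∃ κ : ℝ, κ ≠ 0 ∧ x = κ * cos ω ∧ y = -(κ * sin ω) := by
  by_cases hy : y = 0
  · exact ⟨0, ⟨le_rfl, pi_pos⟩, x, fun hx => h ⟨hx, hy⟩, by simp, by simp [hy]⟩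
  · set φ := arctan (-x / y) with hφ
    have hcpos : 0 < cos φ := cos_arctan_pos _
    have hs : sin φ = -x / y * cos φ := by
      have := tan_mul_cos hcpos.ne'
      rw [hφ, tan_arctan, ← hφ] at this
      exact this.symm
    have b1 := arctan_lt_pi_div_two (-x / y)
    have b2 := neg_pi_div_two_lt_arctan (-x / y)
    rw [← hφ] at b1 b2
    refine ⟨π / 2 - φ, ⟨by linarith, by linarith⟩, -y / cos φ,
      div_ne_zero (neg_ne_zero.2 hy) hcpos.ne', ?_, ?_⟩
    · rw [cos_pi_div_two_sub, hs]
      field_simp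
    · rw [sin_pi_div_two_sub]
      field_simp

theorem isSolution_iff {a b c : ℝ → ℝ} {z : ℝ → Fin 2 → ℝ} :
    IsSolution (fun t => !![a t, b t; b t, c t]) z ↔
      Sol a b c (fun t => z t 0) (fun t => z t 1) := by
  constructor
  · rintro ⟨z', h1, h2⟩ t
    have e0 := congrFun (h2 t) 0
    have e1 := congrFun (h2 t) 1
    simp [Jmat, Matrix.mulVec, dotProduct, Fin.sum_univ_two] at e0 e1
    constructor
    · rw [← e1]
      exact h1 t 0
    · rw [show -(a t * z t 0) - b t * z t 1 = z' t 1 by linarith]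
      exact h1 t 1
  · intro h
    refine ⟨fun t => ![b t * z t 0 + c t * z t 1, -(a t * z t 0) - b t * z t 1], ?_, ?_⟩
    · intro t i
      fin_cases i
      · exact (h t).1
      · exact (h t).2
    · intro t
      ext i
      fin_cases i
      · simp [Jmat, Matrix.mulVec, dotProduct, Fin.sum_univ_two]
        ring
      · simp [Jmat, Matrix.mulVec, dotProduct, Fin.sum_univ_two]

/-- Floquet solutions with multiplier `ε = ±1` in terms of polar data: the multiplier is the cosine
of the rotation angle. -/
theorem PolarFlow.exists_floquet_iff {a b c : ℝ → ℝ} {θ r : ℝ → ℝ → ℝ} {T : ℝ}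
    (F : PolarFlow a b c θ r) (haper : ∀ t, a (t + T) = a t)
    (hbper : ∀ t, b (t + T) = b t) (hcper : ∀ t, c (t + T) = c t) {ε : ℝ} (hε : ε ^ 2 = 1) :
    (∃ z, IsSolution (fun t => !![a t, b t; b t, c t]) z ∧ z 0 ≠ 0 ∧
      ∀ t, z (t + T) = ε • z t) ↔
    ∃ ω ∈ Set.Ico 0 π, r T ω = 1 ∧ cos (θ T ω - ω) = ε := by
  constructor
  · rintro ⟨z, hz, hz0, hper⟩
    rw [isSolution_iff] at hz
    have hne : ¬(z 0 0 = 0 ∧ z 0 1 = 0) := by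
      rintro ⟨h0, h1⟩
      apply hz0
      ext i
      fin_cases i
      · exact h0
      · exact h1
    obtain ⟨ω, hω, κ, hκ, hx, hy⟩ := exists_polar hne
    have hu := F.uniq (hz.comb (F.sol ω) 1 (-κ))
      (by simp only [F.θ0, F.r0, hx]; ring) (by simp only [F.θ0, F.r0, hy]; ring) T
    have hp0 := congrFun (hper 0) 0
    have hp1 := congrFun (hper 0) 1
    simp only [zero_add, Pi.smul_apply, smul_eq_mul] at hp0 hp1
    have e0 : r T ω * cos (θ T ω) = ε * cos ω := by
      apply mul_left_cancel₀ hκ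
      linear_combination -hu.1 + hp0 + ε * hx
    have e1 : r T ω * sin (θ T ω) = ε * sin ω := by
      apply mul_left_cancel₀ hκ
      linear_combination hu.2 - hp1 - ε * hy
    have s1 := sin_sq_add_cos_sq (θ T ω)
    have s2 := sin_sq_add_cos_sq ω
    have hr2 : r T ω ^ 2 = 1 := by
      linear_combination (-(r T ω) ^ 2) * s1 + (r T ω * cos (θ T ω) + ε * cos ω) * e0 +
        (r T ω * sin (θ T ω) + ε * sin ω) * e1 + ε ^ 2 * s2 + hε
    have hr1 : r T ω = 1 := by
      have := F.r_pos ω T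
      nlinarith
    refine ⟨ω, hω, hr1, ?_⟩
    rw [hr1] at e0 e1
    rw [cos_sub]
    linear_combination cos ω * e0 + sin ω * e1 + ε * s2
  · rintro ⟨ω, -, hr1, hcos⟩
    have hsin : sin (θ T ω - ω) = 0 := by
      have := sin_sq_add_cos_sq (θ T ω - ω)
      rw [hcos, hε] at this
      have : sin (θ T ω - ω) ^ 2 = 0 := by linarith
      exact pow_eq_zero_iff (two_ne_zero) |>.1 this
    have hc : cos (θ T ω) = ε * cos ω := by
      have := cos_add (θ T ω - ω) ω
      rw [hcos, hsin, sub_add_cancel] at this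
      linarith
    have hs : sin (θ T ω) = ε * sin ω := by
      have := sin_add (θ T ω - ω) ω
      rw [hcos, hsin, sub_add_cancel] at this
      linarith
    have hS := F.sol ω
    refine ⟨fun t => ![r t ω * cos (θ t ω), -(r t ω * sin (θ t ω))], isSolution_iff.2 hS, ?_, ?_⟩
    · intro h
      have h0 := congrFun h 0
      have h1 := congrFun h 1
      simp [F.θ0, F.r0] at h0 h1
      have := sin_sq_add_cos_sq ω
      simp [h0, h1] at this
    · intro t
      have hu := F.uniq ((hS.shift haper hbper hcper).comb hS 1 (-ε))
        (by simp only [F.θ0, F.r0, hr1, hc, zero_add]; ring)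
        (by simp only [F.θ0, F.r0, hr1, hs, zero_add]; ring) t
      ext i
      fin_cases i
      · have := hu.1
        simp
        linarith
      · have := hu.2
        simp
        linarith

/-! ### The trichotomy -/

/-- With `η_T⁻`, `η_T⁺` the minimum and maximum over `ω ∈ [0,π)` of
the winding number `η_T(ω)`, there is `ℓ ∈ ℤ` such that either (Case 1)
`ℓ − 1/2 < η_T⁻ ≤ ℓ ≤ η_T⁺ < ℓ + 1/2` or (Case 2) `ℓ < η_T⁻ ≤ η_T⁺ < ℓ + 1`; moreover
a nontrivial `T`-periodic solution exists iff Case 1 holds with `η_T⁻ = ℓ` or `η_T⁺ = ℓ`,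
and a nontrivial `T`-antiperiodic solution exists iff Case 2 holds with
`η_T⁻ = ℓ + 1/2` or `η_T⁺ = ℓ + 1/2`. -/
theorem winding_trichotomy
    (T : ℝ) (hT : 0 < T)
    (a b c : ℝ → ℝ)
    (ha : Continuous a) (hb : Continuous b) (hc : Continuous c)
    (haper : ∀ t, a (t + T) = a t) (hbper : ∀ t, b (t + T) = b t)
    (hcper : ∀ t, c (t + T) = c t)
    (θ r : ℝ → ℝ → ℝ)
    (hθ0 : ∀ ω, θ 0 ω = ω) (hr0 : ∀ ω, r 0 ω = 1)
    (hθ : ∀ ω t, HasDerivAt (fun s => θ s ω)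
      (a t * cos (θ t ω) ^ 2 + c t * sin (θ t ω) ^ 2
        - 2 * b t * cos (θ t ω) * sin (θ t ω)) t)
    (hr : ∀ ω t, HasDerivAt (fun s => r s ω)
      (- r t ω * (sin (θ t ω) * cos (θ t ω) * (c t - a t)
        - (cos (θ t ω) ^ 2 - sin (θ t ω) ^ 2) * b t)) t)
    (ηm ηM : ℝ)
    (hmin : IsLeast ((fun ω => (θ T ω - ω) / (2 * π)) '' Set.Ico 0 π) ηm)
    (hmax : IsGreatest ((fun ω => (θ T ω - ω) / (2 * π)) '' Set.Ico 0 π) ηM) :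
    ∃ ℓ : ℤ,
      ((((ℓ : ℝ) - 1 / 2 < ηm ∧ ηm ≤ ℓ ∧ (ℓ : ℝ) ≤ ηM ∧ ηM < (ℓ : ℝ) + 1 / 2) ∨
        ((ℓ : ℝ) < ηm ∧ ηM < (ℓ : ℝ) + 1)) ∧
      ((∃ z, IsSolution (fun t => !![a t, b t; b t, c t]) z ∧ z 0 ≠ 0 ∧
          ∀ t, z (t + T) = z t) ↔
        (((ℓ : ℝ) - 1 / 2 < ηm ∧ ηm ≤ ℓ ∧ (ℓ : ℝ) ≤ ηM ∧ ηM < (ℓ : ℝ) + 1 / 2) ∧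
          (ηm = ℓ ∨ ηM = ℓ))) ∧
      ((∃ z, IsSolution (fun t => !![a t, b t; b t, c t]) z ∧ z 0 ≠ 0 ∧
          ∀ t, z (t + T) = -z t) ↔
        (((ℓ : ℝ) < ηm ∧ ηM < (ℓ : ℝ) + 1) ∧
          (ηm = (ℓ : ℝ) + 1 / 2 ∨ ηM = (ℓ : ℝ) + 1 / 2)))) := by
  have F : PolarFlow a b c θ r := ⟨hθ0, hr0, hθ, hr⟩
  have hπ := pi_pos
  have hper := F.exists_floquet_iff (ε := 1) haper hbper hcper (by norm_num)
  have hanti := F.exists_floquet_iff (ε := -1) haper hbper hcper (by norm_num)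
  simp only [one_smul] at hper
  simp only [neg_smul, one_smul] at hanti
  rw [hper, hanti]
  clear hper hanti
  have hlow : ∀ ω ∈ Set.Ico 0 π, ηm ≤ (θ T ω - ω) / (2 * π) := fun ω hω => hmin.2 ⟨ω, hω, rfl⟩
  have hup : ∀ ω ∈ Set.Ico 0 π, (θ T ω - ω) / (2 * π) ≤ ηM := fun ω hω => hmax.2 ⟨ω, hω, rfl⟩
  obtain ⟨⟨ωm, hωm, hm⟩, -⟩ := hmin
  obtain ⟨⟨ωM, hωM, hM⟩, -⟩ := hmax
  simp only at hm hM
  have hgap : ηM - ηm < 1 / 2 := by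
    have := (F.abs_lt hωm hωM T).2
    rw [← hm, ← hM, ← sub_div, div_lt_iff₀ (by positivity)]
    linarith
  have hle : ηm ≤ ηM := hm ▸ hup ωm hωm
  have hext : ∀ ω ∈ Set.Ico 0 π, r T ω = 1 ↔
      ((θ T ω - ω) / (2 * π) = ηm ∨ (θ T ω - ω) / (2 * π) = ηM) := by
    intro ω hω
    rw [F.extremal_iff hω T]
    refine or_congr ⟨fun h => ?_, fun h ω' hω' => ?_⟩ ⟨fun h => ?_, fun h ω' hω' => ?_⟩
    · refine le_antisymm ?_ (hlow ω hω)
      rw [← hm]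
      have := h ωm hωm
      gcongr
    · have := hlow ω' hω'
      rw [← h] at this
      exact (div_le_div_iff_of_pos_right (by positivity)).1 this
    · refine le_antisymm (hup ω hω) ?_
      rw [← hM]
      have := h ωM hωM
      gcongr
    · have := hup ω' hω'
      rw [← h] at this
      exact (div_le_div_iff_of_pos_right (by positivity)).1 this
  have hcos1 : ∀ ω, cos (θ T ω - ω) = 1 ↔ ∃ n : ℤ, (θ T ω - ω) / (2 * π) = n := by
    intro ω
    rw [cos_eq_one_iff]
    refine exists_congr fun n => ?_
    rw [div_eq_iff (by positivity)]
    exact eq_comm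
  have hcos2 : ∀ ω, cos (θ T ω - ω) = -1 ↔ ∃ n : ℤ, (θ T ω - ω) / (2 * π) = n + 1 / 2 := by
    intro ω
    rw [cos_eq_neg_one_iff]
    refine exists_congr fun n => ?_
    rw [div_eq_iff (by positivity)]
    constructor <;> intro h <;> linarith
  have hP : (∃ ω ∈ Set.Ico 0 π, r T ω = 1 ∧ cos (θ T ω - ω) = 1) ↔
      ∃ n : ℤ, ηm = n ∨ ηM = n := by
    constructor
    · rintro ⟨ω, hω, h1, h2⟩
      obtain ⟨n, hn⟩ := (hcos1 ω).1 h2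
      exact ⟨n, ((hext ω hω).1 h1).imp (fun h => h.symm.trans hn) (fun h => h.symm.trans hn)⟩
    · rintro ⟨n, hn | hn⟩
      · exact ⟨ωm, hωm, (hext _ hωm).2 (Or.inl hm), (hcos1 _).2 ⟨n, hm.trans hn⟩⟩
      · exact ⟨ωM, hωM, (hext _ hωM).2 (Or.inr hM), (hcos1 _).2 ⟨n, hM.trans hn⟩⟩
  have hA : (∃ ω ∈ Set.Ico 0 π, r T ω = 1 ∧ cos (θ T ω - ω) = -1) ↔
      ∃ n : ℤ, ηm = n + 1 / 2 ∨ ηM = n + 1 / 2 := by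
    constructor
    · rintro ⟨ω, hω, h1, h2⟩
      obtain ⟨n, hn⟩ := (hcos2 ω).1 h2
      exact ⟨n, ((hext ω hω).1 h1).imp (fun h => h.symm.trans hn) (fun h => h.symm.trans hn)⟩
    · rintro ⟨n, hn | hn⟩
      · exact ⟨ωm, hωm, (hext _ hωm).2 (Or.inl hm), (hcos2 _).2 ⟨n, hm.trans hn⟩⟩
      · exact ⟨ωM, hωM, (hext _ hωM).2 (Or.inr hM), (hcos2 _).2 ⟨n, hM.trans hn⟩⟩
  rw [hP, hA]
  -- integers within distance `< 1` of each other coincide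
  have hclose : ∀ m n : ℤ, (m : ℝ) - 1 < n → (n : ℝ) < m + 1 → n = m := by
    intro m n h1 h2
    have h1' : m - 1 < n := by exact_mod_cast h1
    have h2' : n < m + 1 := by exact_mod_cast h2
    omega
  by_cases hex : ∃ ℓ : ℤ, ηm ≤ ℓ ∧ (ℓ : ℝ) ≤ ηM
  · obtain ⟨ℓ, h1, h2⟩ := hex
    have hc1 : (ℓ : ℝ) - 1 / 2 < ηm ∧ ηm ≤ ℓ ∧ (ℓ : ℝ) ≤ ηM ∧ ηM < (ℓ : ℝ) + 1 / 2 :=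
      ⟨by linarith, h1, h2, by linarith⟩
    refine ⟨ℓ, Or.inl hc1, ⟨?_, fun h => ⟨ℓ, h.2⟩⟩, ⟨?_, fun h => ⟨ℓ, h.2⟩⟩⟩
    · rintro ⟨n, hn⟩
      obtain rfl : n = ℓ := hclose ℓ n (by rcases hn with hn | hn <;> linarith)
        (by rcases hn with hn | hn <;> linarith)
      exact ⟨hc1, hn⟩
    · rintro ⟨n, hn⟩
      exfalso
      have e1 : ((ℓ - 1 : ℤ) : ℝ) < n := by
        push_cast
        rcases hn with hn | hn <;> linarith
      have e2 : (n : ℝ) < ℓ := by rcases hn with hn | hn <;> linarith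
      have e1' : ℓ - 1 < n := by exact_mod_cast e1
      have e2' : n < ℓ := by exact_mod_cast e2
      omega
  · push Not at hex
    have f1 := Int.floor_le ηm
    have f2 := Int.lt_floor_add_one ηm
    have hc2 : ((⌊ηm⌋ : ℤ) : ℝ) < ηm ∧ ηM < (⌊ηm⌋ : ℝ) + 1 := by
      constructor
      · refine lt_of_le_of_ne f1 fun h => ?_
        have := hex ⌊ηm⌋ h.ge
        linarith
      · have := hex (⌊ηm⌋ + 1) (by push_cast; exact f2.le)
        push_cast at this
        exact this
    refine ⟨⌊ηm⌋, Or.inr hc2, ⟨?_, fun h => ⟨_, h.2⟩⟩, ⟨?_, fun h => ⟨_, h.2⟩⟩⟩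
    · rintro ⟨n, hn⟩
      exfalso
      have := hex n (by rcases hn with hn | hn <;> linarith)
      rcases hn with hn | hn <;> linarith
    · rintro ⟨n, hn⟩
      obtain rfl : n = ⌊ηm⌋ := hclose ⌊ηm⌋ n (by rcases hn with hn | hn <;> linarith)
        (by rcases hn with hn | hn <;> linarith)
      exact ⟨hc2, hn⟩
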